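/- Assume A is standardized and let 1 ≤ β ≤ m. Let x ∈ range(Aᵀ), and for each subset τ ⊆ {1,…,m} of cardinality β let x_τ⁺ be the exact block Kaczmarz update of x with respect to τ. Assume D := Σ_τ min_{i∈τ} (A^{(i)}x − b_i)² > 0 and set ξ = (Σ_τ ‖A_τ x − b_τ‖₂²) / D. Then (1/C(m,β)) Σ_τ ‖x_τ⁺ − x⋆‖₂² ≤ (1 − (β/ξ)·λ_min⁺(AᵀA)/m) · ‖x − x⋆‖₂². -/

import Mathlib

open Matrix Finset

/-- The largest eigenvalue of a square real matrix (as the supremum of its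
eigenvalue set). -/
noncomputable def maxEig {k : ℕ} (M : Matrix (Fin k) (Fin k) ℝ) : ℝ :=
  sSup {μ : ℝ | Module.End.HasEigenvalue (Matrix.mulVecLin M) μ}

/-- The smallest positive eigenvalue of a square real matrix. -/
noncomputable def minPosEig {k : ℕ} (M : Matrix (Fin k) (Fin k) ℝ) : ℝ :=
  sInf {μ : ℝ | Module.End.HasEigenvalue (Matrix.mulVecLin M) μ ∧ 0 < μ}

/-- The restriction of `A` to the rows indexed by `I`. -/
def rowSub {m n : ℕ} (A : Matrix (Fin m) (Fin n) ℝ) (I : Finset (Fin m)) :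
    Matrix {i : Fin m // i ∈ I} (Fin n) ℝ :=
  fun i j => A i.1 j

/-- Squared Euclidean norm. -/
noncomputable def sqNorm {k : ℕ} (v : Fin k → ℝ) : ℝ := ∑ j, (v j) ^ 2

/-- `xp` is the exact block Kaczmarz update of `x` with respect to the row
index set `I`: it satisfies the equations indexed by `I` and minimizes the
distance to `x` among all such points (hence is the orthogonal projection of
`x` onto the affine solution set, which is the unique such minimizer). -/
def IsKaczmarzUpdate {m n : ℕ} (A : Matrix (Fin m) (Fin n) ℝ)
    (b : Fin m → ℝ) (I : Finset (Fin m)) (x xp : Fin n → ℝ) : Prop :=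
  (∀ i ∈ I, A i ⬝ᵥ xp = b i) ∧
  ∀ y : Fin n → ℝ, (∀ i ∈ I, A i ⬝ᵥ y = b i) → sqNorm (xp - x) ≤ sqNorm (y - x)

/-- `I` is a greedy `δ`-subset of `τ` for `x`: `I ⊆ τ`, `|I| = δ`, and the
residual entries on `I` dominate (in absolute value) those on `τ \ I`. -/
def IsGreedySubset {m n : ℕ} (A : Matrix (Fin m) (Fin n) ℝ) (b : Fin m → ℝ)
    (x : Fin n → ℝ) (δ : ℕ) (τ I : Finset (Fin m)) : Prop :=
  I ⊆ τ ∧ I.card = δ ∧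
    ∀ i ∈ I, ∀ j ∈ τ \ I, |A j ⬝ᵥ x - b j| ≤ |A i ⬝ᵥ x - b i|

/-- Summing `∑ i ∈ τ, f i` over all `β`-subsets `τ` counts every index `C(m-1, β-1)` times. -/
theorem mul_sum_powersetCard_sum {m β : ℕ} (hβ1 : 1 ≤ β) (hβm : β ≤ m) (f : Fin m → ℝ) :
    (m : ℝ) * ∑ τ ∈ powersetCard β (univ : Finset (Fin m)), ∑ i ∈ τ, f i =
      β * m.choose β * ∑ i, f i := by
  have hcount (i : Fin m) :
      (#{τ ∈ powersetCard β (univ : Finset (Fin m)) | i ∈ τ} : ℕ) =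
        (m - 1).choose (β - 1) := by
    simpa using card_filter_powersetCard_subset {i} (univ : Finset (Fin m)) β (by simp) (by simpa)
  have hchoose : (m : ℝ) * (m - 1).choose (β - 1) = β * m.choose β := by
    obtain ⟨k, rfl⟩ := Nat.exists_eq_add_of_le' hβ1
    obtain ⟨l, rfl⟩ := Nat.exists_eq_add_of_le' (hβ1.trans hβm)
    have h := Nat.add_one_mul_choose_eq l k
    simp only [Nat.add_sub_cancel]
    rw [mul_comm ((k + 1 : ℕ) : ℝ)]
    exact_mod_cast h
  have hswap : ∑ τ ∈ powersetCard β (univ : Finset (Fin m)), ∑ i ∈ τ, f i =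
      ∑ i, ∑ τ ∈ powersetCard β (univ : Finset (Fin m)) with i ∈ τ, f i :=
    sum_comm' (by simp)
  simp_rw [hswap, sum_const, hcount, nsmul_eq_mul, ← mul_sum, ← hchoose, mul_assoc]

theorem sqNorm_eq_dotProduct {k : ℕ} (v : Fin k → ℝ) : sqNorm v = v ⬝ᵥ v := by
  simp [sqNorm, dotProduct, sq]

theorem sqNorm_nonneg {k : ℕ} (v : Fin k → ℝ) : 0 ≤ sqNorm v :=
  sum_nonneg fun _ _ => sq_nonneg _

theorem dotProduct_sq_le_sqNorm_mul_sqNorm {k : ℕ} (u v : Fin k → ℝ) :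
    (u ⬝ᵥ v) ^ 2 ≤ sqNorm u * sqNorm v :=
  sum_mul_sq_le_sq_mul_sq _ _ _

theorem sqNorm_mulVec {m n : ℕ} (A : Matrix (Fin m) (Fin n) ℝ) (v : Fin n → ℝ) :
    sqNorm (A *ᵥ v) = v ⬝ᵥ ((Aᵀ * A) *ᵥ v) := by
  rw [sqNorm_eq_dotProduct, ← mulVec_mulVec, mulVec_transpose, dotProduct_comm v,
    ← dotProduct_mulVec]

/-- On the row space of `A`, the quadratic form of `Aᵀ * A` is bounded below by the smallest
positive eigenvalue. -/
theorem minPosEig_mul_sqNorm_le {m n : ℕ} (A : Matrix (Fin m) (Fin n) ℝ) {e : Fin n → ℝ}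
    (he : e ∈ Set.range Aᵀ.mulVec) :
    minPosEig (Aᵀ * A) * sqNorm e ≤ sqNorm (A *ᵥ e) := by
  obtain ⟨w, rfl⟩ := he
  set e := Aᵀ *ᵥ w with he
  have hM : (Aᵀ * A).IsHermitian := by
    simpa [conjTranspose_eq_transpose_of_trivial] using isHermitian_conjTranspose_mul_self A
  let v : Fin n → Fin n → ℝ := fun k => (hM.eigenvectorBasis k).ofLp
  have hv (k : Fin n) : (Aᵀ * A) *ᵥ v k = hM.eigenvalues k • v k :=
    hM.mulVec_eigenvectorBasis k
  have parseval (x y : Fin n → ℝ) : ∑ k, (v k ⬝ᵥ x) * (v k ⬝ᵥ y) = x ⬝ᵥ y := by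
    have h := hM.eigenvectorBasis.sum_inner_mul_inner (WithLp.toLp 2 x) (WithLp.toLp 2 y)
    simp only [EuclideanSpace.inner_eq_star_dotProduct, star_trivial] at h
    rw [dotProduct_comm x y, ← h]
    exact sum_congr rfl fun k _ => by rw [dotProduct_comm y]
  have hvv (k : Fin n) : v k ⬝ᵥ v k = 1 := by
    have h := hM.eigenvectorBasis.inner_eq_one k
    simpa only [EuclideanSpace.inner_eq_star_dotProduct, star_trivial] using h
  have hAv (k : Fin n) : sqNorm (A *ᵥ v k) = hM.eigenvalues k := by
    rw [sqNorm_mulVec, hv, dotProduct_smul, hvv, smul_eq_mul, mul_one]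
  have hMe (k : Fin n) : v k ⬝ᵥ ((Aᵀ * A) *ᵥ e) = hM.eigenvalues k * (v k ⬝ᵥ e) := by
    rw [dotProduct_mulVec, ← mulVec_transpose, transpose_mul, transpose_transpose, hv,
      smul_dotProduct, smul_eq_mul]
  rw [sqNorm_mulVec A e, sqNorm_eq_dotProduct e, ← parseval e e, ← parseval e, mul_sum]
  refine sum_le_sum fun k _ => ?_
  rw [hMe]
  have hnonneg : 0 ≤ hM.eigenvalues k := hAv k ▸ sqNorm_nonneg _
  rcases hnonneg.eq_or_lt with h0 | hpos
  · have hAv0 : A *ᵥ v k = 0 := by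
      rw [← dotProduct_self_eq_zero, ← sqNorm_eq_dotProduct, hAv, ← h0]
    have hve : v k ⬝ᵥ e = 0 := by
      rw [he, dotProduct_mulVec, vecMul_transpose, hAv0, zero_dotProduct]
    simp [hve]
  · have hmin : minPosEig (Aᵀ * A) ≤ hM.eigenvalues k := by
      refine csInf_le ⟨0, fun μ hμ => hμ.2.le⟩ ⟨?_, hpos⟩
      refine Module.End.hasEigenvalue_of_hasEigenvector (x := v k)
        (Module.End.hasEigenvector_iff.2 ⟨Module.End.mem_eigenspace_iff.2 (hv k), fun h => ?_⟩)
      simpa [h] using hvv k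
    nlinarith [mul_le_mul_of_nonneg_right hmin (mul_self_nonneg (v k ⬝ᵥ e))]

/-- An exact block update is an orthogonal projection, so it satisfies Pythagoras with respect to
every solution of the block. -/
theorem IsKaczmarzUpdate.sqNorm_add_sqNorm_le {m n : ℕ} {A : Matrix (Fin m) (Fin n) ℝ}
    {b : Fin m → ℝ} {I : Finset (Fin m)} {x xp y : Fin n → ℝ}
    (h : IsKaczmarzUpdate A b I x xp) (hy : ∀ i ∈ I, A i ⬝ᵥ y = b i) :
    sqNorm (xp - x) + sqNorm (xp - y) ≤ sqNorm (x - y) := by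
  set u := xp - x with hu
  set d := y - xp with hd
  have hquad (t : ℝ) : 0 ≤ 2 * t * (u ⬝ᵥ d) + t ^ 2 * (d ⬝ᵥ d) := by
    have hfeas : ∀ i ∈ I, A i ⬝ᵥ (xp + t • d) = b i := fun i hi => by
      simp [hd, dotProduct_add, dotProduct_smul, dotProduct_sub, h.1 i hi, hy i hi]
    have hle := h.2 _ hfeas
    rw [show xp + t • d - x = u + t • d by rw [hu]; abel, ← hu, sqNorm_eq_dotProduct,
      sqNorm_eq_dotProduct] at hle
    simp only [add_dotProduct, dotProduct_add, smul_dotProduct, dotProduct_smul, smul_eq_mul,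
      dotProduct_comm d u] at hle
    linarith
  have hdd : 0 ≤ d ⬝ᵥ d := sqNorm_eq_dotProduct d ▸ sqNorm_nonneg d
  have hud : 0 ≤ u ⬝ᵥ d := by
    by_contra! hneg
    have ht := hquad (-(u ⬝ᵥ d) / (d ⬝ᵥ d + 1))
    have hpos : 0 < d ⬝ᵥ d + 1 := by linarith
    have : 2 * (-(u ⬝ᵥ d) / (d ⬝ᵥ d + 1)) * (u ⬝ᵥ d) +
        (-(u ⬝ᵥ d) / (d ⬝ᵥ d + 1)) ^ 2 * (d ⬝ᵥ d) =
        -((u ⬝ᵥ d) ^ 2 * (d ⬝ᵥ d + 2)) / (d ⬝ᵥ d + 1) ^ 2 := by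
      field_simp
      ring
    rw [this] at ht
    have hlt : -((u ⬝ᵥ d) ^ 2 * (d ⬝ᵥ d + 2)) / (d ⬝ᵥ d + 1) ^ 2 < 0 :=
      div_neg_of_neg_of_pos (neg_neg_of_pos (mul_pos (sq_pos_of_neg hneg) (by linarith)))
        (by positivity)
    linarith
  rw [show xp - y = -d by rw [hd]; abel, show x - y = -(u + d) by rw [hu, hd]; abel]
  simp only [sqNorm_eq_dotProduct, neg_dotProduct, dotProduct_neg, neg_neg, add_dotProduct,
    dotProduct_add, dotProduct_comm d u]
  linarith

theorem rbk_one_step_standardized {m n : ℕ} (β : ℕ) (hβ1 : 1 ≤ β) (hβm : β ≤ m)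
    (A : Matrix (Fin m) (Fin n) ℝ) (hA : A ≠ 0)
    (hstd : ∀ i : Fin m, ∑ j, (A i j) ^ 2 = 1)
    (b : Fin m → ℝ)
    (xstar : Fin n → ℝ) (hconsistent : A.mulVec xstar = b)
    (hxstar : xstar ∈ Set.range Aᵀ.mulVec)
    (x : Fin n → ℝ) (hx : x ∈ Set.range Aᵀ.mulVec)
    (xp : Finset (Fin m) → Fin n → ℝ)
    (hxp : ∀ τ ∈ Finset.powersetCard β (Finset.univ : Finset (Fin m)),
      IsKaczmarzUpdate A b τ x (xp τ))
    (D : ℝ)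
    (hD : D = ∑ τ ∈ Finset.powersetCard β (Finset.univ : Finset (Fin m)),
      sInf ((fun i => (A i ⬝ᵥ x - b i) ^ 2) '' ↑τ))
    (hDpos : 0 < D)
    (ξ : ℝ)
    (hξ : ξ = (∑ τ ∈ Finset.powersetCard β (Finset.univ : Finset (Fin m)),
      ∑ i ∈ τ, (A i ⬝ᵥ x - b i) ^ 2) / D) :
    (1 / (m.choose β : ℝ)) *
        ∑ τ ∈ Finset.powersetCard β (Finset.univ : Finset (Fin m)),
          sqNorm (xp τ - xstar) ≤
      (1 - ((β : ℝ) / ξ) * (minPosEig (Aᵀ * A) / (m : ℝ))) * sqNorm (x - xstar) := by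
  have hm : (0 : ℝ) < m := by exact_mod_cast hβ1.trans hβm
  have hβ : (0 : ℝ) < β := by exact_mod_cast hβ1
  have hC : (0 : ℝ) < m.choose β := by exact_mod_cast Nat.choose_pos hβm
  have hsol (i : Fin m) : A i ⬝ᵥ xstar = b i := congrFun hconsistent i
  have hres (i : Fin m) : A i ⬝ᵥ x - b i = (A *ᵥ (x - xstar)) i := by
    rw [← hsol, ← dotProduct_sub]
    rfl
  have hinf {τ : Finset (Fin m)} {i : Fin m} (hi : i ∈ τ) :
      sInf ((fun i => (A i ⬝ᵥ x - b i) ^ 2) '' ↑τ) ≤ (A i ⬝ᵥ x - b i) ^ 2 :=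
    csInf_le ⟨0, by rintro _ ⟨j, _, rfl⟩; exact sq_nonneg _⟩ ⟨i, hi, rfl⟩
  have hnonempty {τ : Finset (Fin m)} (hτ : τ ∈ powersetCard β (univ : Finset (Fin m))) :
      τ.Nonempty := by
    rw [← card_pos, (mem_powersetCard.1 hτ).2]
    exact hβ1
  have hstep {τ : Finset (Fin m)} (hτ : τ ∈ powersetCard β (univ : Finset (Fin m))) :
      sqNorm (xp τ - xstar) ≤
        sqNorm (x - xstar) - sInf ((fun i => (A i ⬝ᵥ x - b i) ^ 2) '' ↑τ) := by
    obtain ⟨i, hi⟩ := hnonempty hτ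
    have hpyth := (hxp τ hτ).sqNorm_add_sqNorm_le fun i _ => hsol i
    have hcs := dotProduct_sq_le_sqNorm_mul_sqNorm (A i) (xp τ - x)
    rw [show sqNorm (A i) = 1 from hstd i, one_mul, dotProduct_sub, (hxp τ hτ).1 i hi,
      sub_sq_comm] at hcs
    linarith [hinf hi]
  have hsum : ∑ τ ∈ powersetCard β (univ : Finset (Fin m)), sqNorm (xp τ - xstar) ≤
      m.choose β * sqNorm (x - xstar) - D := by
    refine (sum_le_sum fun τ hτ => hstep hτ).trans_eq ?_
    rw [sum_sub_distrib, ← hD]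
    simp
  set S := ∑ τ ∈ powersetCard β (univ : Finset (Fin m)), ∑ i ∈ τ, (A i ⬝ᵥ x - b i) ^ 2 with hS
  have hSpos : 0 < S := by
    refine hDpos.trans_le (hD.trans_le (sum_le_sum fun τ hτ => ?_))
    obtain ⟨i, hi⟩ := hnonempty hτ
    exact (hinf hi).trans
      (single_le_sum (f := fun i => (A i ⬝ᵥ x - b i) ^ 2) (fun _ _ => sq_nonneg _) hi)
  have hcount : (m : ℝ) * S = β * m.choose β * sqNorm (A *ᵥ (x - xstar)) := by
    rw [hS, mul_sum_powersetCard_sum hβ1 hβm]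
    simp_rw [hres]
    rfl
  have heig : minPosEig (Aᵀ * A) * sqNorm (x - xstar) ≤ sqNorm (A *ᵥ (x - xstar)) := by
    obtain ⟨u, rfl⟩ := hx
    obtain ⟨w, rfl⟩ := hxstar
    exact minPosEig_mul_sqNorm_le A ⟨u - w, mulVec_sub _ _ _⟩
  have hrate : (β : ℝ) / ξ * (minPosEig (Aᵀ * A) / m) * sqNorm (x - xstar) ≤
      D / m.choose β := by
    rw [hξ, show (β : ℝ) / (S / D) * (minPosEig (Aᵀ * A) / m) * sqNorm (x - xstar) =
      D * (β * (minPosEig (Aᵀ * A) * sqNorm (x - xstar))) / (m * S) by field_simp,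
      div_le_div_iff₀ (mul_pos hm hSpos) hC, hcount]
    have := mul_le_mul_of_nonneg_left heig (mul_pos (mul_pos hDpos hβ) hC).le
    linarith
  calc _ ≤ 1 / (m.choose β : ℝ) * (m.choose β * sqNorm (x - xstar) - D) :=
        mul_le_mul_of_nonneg_left hsum (by positivity)
    _ = sqNorm (x - xstar) - D / m.choose β := by field_simp
    _ ≤ _ := by linarith
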